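/- arXiv:1307.5408 — 2 statements merged into one kernel-verified Lean document; each statement's English description precedes it below -/
import Mathlib

section
/- Let K be an algebraically closed field of characteristic 0, let V ⊆ (Kˣ)ⁿ be a Kummer generic irreducible variety, and let T ⊆ (Kˣ)ⁿ × (Kˣ)ⁿ be a correspondence torus. Then there exists a unique irreducible variety V' ⊆ (Kˣ)ⁿ such that T induces a toric correspondence between V and V'. -/
namespace BadFields

variable (K : Type) [Field K]

/-- The divisible hull `⟨A⟩` of a subset `A ⊆ Kˣ`: all `x` with `x ^ k` in the subgroup
generated by `A` for some `k ≥ 1`.  Note that `⟨∅⟩` is exactly the group of roots of unity. -/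
def divHull (A : Set Kˣ) : Subgroup Kˣ where
  carrier := {x | ∃ k : ℕ, k ≠ 0 ∧ x ^ k ∈ Subgroup.closure A}
  one_mem' := ⟨1, one_ne_zero, by simpa using Subgroup.one_mem _⟩
  mul_mem' := by
    rintro x y ⟨k, hk, hx⟩ ⟨l, hl, hy⟩
    refine ⟨k * l, mul_ne_zero hk hl, ?_⟩
    rw [mul_pow]
    exact Subgroup.mul_mem _ (by rw [pow_mul]; exact Subgroup.pow_mem _ hx l)
      (by rw [mul_comm k l, pow_mul]; exact Subgroup.pow_mem _ hy k)
  inv_mem' := by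
    rintro x ⟨k, hk, hx⟩
    exact ⟨k, hk, by rw [inv_pow]; exact Subgroup.inv_mem _ hx⟩

/-- A subgroup `U` of `Kˣ` is divisible if every element has `k`-th roots in `U` for all
`k ≥ 1`. -/
def DivisibleSub (U : Subgroup Kˣ) : Prop :=
  ∀ u ∈ U, ∀ k : ℕ, k ≠ 0 → ∃ v ∈ U, v ^ k = u

/-- The lattice of multiplicative relations of the tuple `y` modulo the divisible hull of `A`.
Since `Kˣ/⟨A⟩` is torsion-free, this lattice is saturated, and the dimension of the
`ℚ`-subspace of `Kˣ/Tor` spanned by (the images of) `y` over (the image of) `A` equals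
`n` minus the rank of this lattice. -/
def relLattice (A : Set Kˣ) {n : ℕ} (y : Fin n → Kˣ) : Submodule ℤ (Fin n → ℤ) where
  carrier := {c | (∏ i, y i ^ c i) ∈ divHull K A}
  zero_mem' := by simpa using Subgroup.one_mem _
  add_mem' := by
    intro c d hc hd
    have h : (∏ i, y i ^ (c + d) i) = (∏ i, y i ^ c i) * ∏ i, y i ^ d i := by
      rw [← Finset.prod_mul_distrib]
      exact Finset.prod_congr rfl fun i _ => by rw [Pi.add_apply, zpow_add]
    show (∏ i, y i ^ (c + d) i) ∈ divHull K A
    rw [h]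
    exact Subgroup.mul_mem _ hc hd
  smul_mem' := by
    intro m c hc
    have h : (∏ i, y i ^ (m • c) i) = (∏ i, y i ^ c i) ^ m := by
      rw [← Finset.prod_zpow]
      exact Finset.prod_congr rfl fun i _ => by
        rw [Pi.smul_apply, smul_eq_mul, mul_comm, zpow_mul]
    show (∏ i, y i ^ (m • c) i) ∈ divHull K A
    rw [h]
    exact Subgroup.zpow_mem _ hc m

/-- `ldimRel K A y` is the linear dimension `ldim(y/A)`: the dimension of the `ℚ`-subspace
spanned by the images of the coordinates of `y` in `Kˣ/Tor` over the subspace spanned by the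
image of `A`. -/
noncomputable def ldimRel (A : Set Kˣ) {n : ℕ} (y : Fin n → Kˣ) : ℕ :=
  n - Module.finrank ℤ (relLattice K A y)

/-- The (absolute) linear dimension `ldim(y)`. -/
noncomputable def ldim {n : ℕ} (y : Fin n → Kˣ) : ℕ := ldimRel K ∅ y

/-- `trdegOver K F s` : the transcendence degree over the subfield `F` of the field generated
by `F` and the set `s`, i.e. the maximal cardinality of a finite subset of `s` which is
algebraically independent over `F`. -/
noncomputable def trdegOver (F : Subfield K) (s : Set K) : ℕ :=
  sSup {d | ∃ t : Finset K, ↑t ⊆ s ∧ t.card = d ∧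
    AlgebraicIndependent F (fun x : {y : K // y ∈ t} => (x : K))}

/-- Transcendence degree over the prime field; in characteristic zero this is
`trdeg(ℚ(s)/ℚ)`. -/
noncomputable def trdegQ (s : Set K) : ℕ := trdegOver K ⊥ s

section Var

variable {ι : Type} [Fintype ι]

/-- The subset of the torus `(Kˣ)^ι` cut out by a set of polynomials. -/
def zeroSet (S : Set (MvPolynomial ι K)) : Set (ι → Kˣ) :=
  {x | ∀ p ∈ S, MvPolynomial.eval (fun i => (x i : K)) p = 0}

/-- Zariski closed subsets of the torus `(Kˣ)^ι` (closed subvarieties). -/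
def IsZClosed (V : Set (ι → Kˣ)) : Prop := ∃ S, V = zeroSet K S

/-- Zariski closed subsets of `(Kˣ)^ι` defined by polynomials all of whose coefficients lie
in `E`; for `E = ↑(⊥ : Subfield K)` (the prime field, i.e. `ℚ` in characteristic `0`) this
means defined over `ℚ`. -/
def IsClosedOver (E : Set K) (V : Set (ι → Kˣ)) : Prop :=
  ∃ S : Set (MvPolynomial ι K),
    (∀ p ∈ S, ∀ m, MvPolynomial.coeff m p ∈ E) ∧ V = zeroSet K S

/-- Irreducible (nonempty) Zariski closed subsets of the torus `(Kˣ)^ι`. -/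
def IsIrredVar (V : Set (ι → Kˣ)) : Prop :=
  IsZClosed K V ∧ V.Nonempty ∧
    ∀ C₁ C₂ : Set (ι → Kˣ), IsZClosed K C₁ → IsZClosed K C₂ →
      V ⊆ C₁ ∪ C₂ → V ⊆ C₁ ∨ V ⊆ C₂

/-- The Zariski closure in `(Kˣ)^ι`. -/
def zcl (S : Set (ι → Kˣ)) : Set (ι → Kˣ) := ⋂₀ {C | IsZClosed K C ∧ S ⊆ C}

/-- The locus of a point `b` over the set of constants `E`: the smallest Zariski closed
set containing `b` defined by polynomials with coefficients in `E`. -/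
def locusOver (E : Set K) (b : ι → Kˣ) : Set (ι → Kˣ) :=
  ⋂₀ {C | IsClosedOver K E C ∧ b ∈ C}

/-- The dimension of a (not necessarily irreducible) Zariski closed subset of `(Kˣ)^ι`:
the supremum of the lengths of strict chains of irreducible closed subsets. -/
noncomputable def vdim (V : Set (ι → Kˣ)) : ℕ :=
  sSup {d | ∃ W : Fin (d + 1) → Set (ι → Kˣ),
    (∀ i, IsIrredVar K (W i) ∧ W i ⊆ V) ∧ StrictMono W}

/-- The monomial map `y ↦ y^M` attached to an integer matrix `M`. -/
def mpow {k : ℕ} (M : Matrix (Fin k) ι ℤ) (y : ι → Kˣ) : Fin k → Kˣ :=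
  fun j => ∏ i, y i ^ M j i

/-- Algebraic subgroups of the torus `(Kˣ)^ι`: subgroups defined by finitely many monomial
equations `y^M = 1`. -/
def IsAlgSubgroup (H : Set (ι → Kˣ)) : Prop :=
  ∃ (k : ℕ) (M : Matrix (Fin k) ι ℤ), H = {y | mpow K M y = 1}

/-- Subtori of `(Kˣ)^ι`: irreducible algebraic subgroups. -/
def IsSubtorus (T : Set (ι → Kˣ)) : Prop := IsAlgSubgroup K T ∧ IsIrredVar K T

/-- The coset `c · T` (multiplication coordinatewise). -/
def coset (c : ι → Kˣ) (T : Set (ι → Kˣ)) : Set (ι → Kˣ) := (fun t => c * t) '' T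

/-- A variety is free if it is not contained in a coset of a proper subtorus. -/
def IsFree (V : Set (ι → Kˣ)) : Prop :=
  ¬ ∃ T c, IsSubtorus K T ∧ T ≠ Set.univ ∧ V ⊆ coset K c T

/-- `T` is the minimal torus of `V`: the smallest subtorus such that `V` is contained in some
coset of it. -/
def IsMinTorus (V T : Set (ι → Kˣ)) : Prop :=
  IsSubtorus K T ∧ (∃ c, V ⊆ coset K c T) ∧
    ∀ T', IsSubtorus K T' → (∃ c, V ⊆ coset K c T') → T ⊆ T'

/-- The codimension `cd(V) = dim(minimal torus of V) - dim V`. -/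
noncomputable def cd (V : Set (ι → Kˣ)) : ℕ :=
  sInf {d | ∃ T c, IsSubtorus K T ∧ V ⊆ coset K c T ∧ d = vdim K T} - vdim K V

/-- `S` is cd-maximal in `W`. -/
def CdMaximal (S W : Set (ι → Kˣ)) : Prop :=
  IsIrredVar K S ∧ S ⊆ W ∧
    ∀ S', IsIrredVar K S' → S ⊂ S' → S' ⊆ W → cd K S < cd K S'

/-- `√[m]{V}`, the preimage of `V` under coordinatewise `m`-th powers. -/
def mroot (m : ℕ) (V : Set (ι → Kˣ)) : Set (ι → Kˣ) := {a | (fun i => a i ^ m) ∈ V}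

/-- An irreducible variety `V` is Kummer generic if `√[m]{V}` is irreducible for all `m ≥ 1`. -/
def KummerGeneric (V : Set (ι → Kˣ)) : Prop :=
  IsIrredVar K V ∧ ∀ m : ℕ, 1 ≤ m → IsIrredVar K (mroot K m V)

/-- Irreducible components of a set `S`: maximal irreducible closed subsets of `S`. -/
def IsIrredComponent (V' S : Set (ι → Kˣ)) : Prop :=
  IsIrredVar K V' ∧ V' ⊆ S ∧ ∀ W, IsIrredVar K W → V' ⊆ W → W ⊆ S → W = V'

end Var

/-- A correspondence torus: an `n`-dimensional subtorus of `(Kˣ)ⁿ × (Kˣ)ⁿ` which projects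
onto `(Kˣ)ⁿ` in both coordinates.  We identify `(Kˣ)ⁿ × (Kˣ)ⁿ` with `(Kˣ)^(Fin n ⊕ Fin n)`,
a pair `(x, y)` corresponding to `Sum.elim x y`. -/
def IsCorrTorus {n : ℕ} (T : Set ((Fin n ⊕ Fin n) → Kˣ)) : Prop :=
  IsSubtorus K T ∧ vdim K T = n ∧
    (∀ x : Fin n → Kˣ, ∃ y, Sum.elim x y ∈ T) ∧
    (∀ y : Fin n → Kˣ, ∃ x, Sum.elim x y ∈ T)

/-- `T` induces a toric correspondence between `V` and `V'`: the Zariski closures of the two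
projections of `(V × V') ∩ T` are `V` and `V'` respectively. -/
def ToricCorr {n : ℕ} (T : Set ((Fin n ⊕ Fin n) → Kˣ)) (V V' : Set (Fin n → Kˣ)) : Prop :=
  zcl K ((fun p => p ∘ Sum.inl) '' {p | p ∈ T ∧ (p ∘ Sum.inl) ∈ V ∧ (p ∘ Sum.inr) ∈ V'}) = V ∧
  zcl K ((fun p => p ∘ Sum.inr) '' {p | p ∈ T ∧ (p ∘ Sum.inl) ∈ V ∧ (p ∘ Sum.inr) ∈ V'}) = V'

/-- The set of elements of `K` underlying a set of units. -/
def unitSet (A : Set Kˣ) : Set K := (fun u : Kˣ => (u : K)) '' A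

/-- `trdeg(y/A)`, the transcendence degree of `ℚ(A ∪ y)` over `ℚ(A)`. -/
noncomputable def trdegRel (A : Set Kˣ) {n : ℕ} (y : Fin n → Kˣ) : ℕ :=
  trdegOver K (Subfield.closure (unitSet K A)) (Set.range fun i => (y i : K))

/-- The predimension `δ(y/A) = 2 trdeg(y/A) - ldim(y/A)`. -/
noncomputable def pdelta (A : Set Kˣ) {n : ℕ} (y : Fin n → Kˣ) : ℤ :=
  2 * (trdegRel K A y : ℤ) - (ldimRel K A y : ℤ)

/-- The extension `⟨A ∪ b⟩/A` is minimal prealgebraic of length `n`. -/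
def MinPrealg {n : ℕ} (A : Set Kˣ) (b : Fin n → Kˣ) : Prop :=
  2 ≤ n ∧ ldimRel K A b = n ∧ pdelta K A b = 0 ∧
    ∀ B' : Set Kˣ, B' = ↑(divHull K B') → A ⊂ B' → B' ⊂ ↑(divHull K (A ∪ Set.range b)) →
      pdelta K B' b < 0


set_option linter.unusedSectionVars false

section Helpers

variable {K : Type} [Field K]
variable {ι κ : Type} [Fintype ι] [Fintype κ]

/-- Evaluate a polynomial at a point of the torus. -/
noncomputable def ev (x : ι → Kˣ) (p : MvPolynomial ι K) : K :=
  MvPolynomial.eval (fun i => (x i : K)) p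

theorem isZClosed_iff (V : Set (ι → Kˣ)) :
    IsZClosed K V ↔ ∀ x, x ∉ V → ∃ p, (∀ y ∈ V, ev y p = 0) ∧ ev x p ≠ 0 := by
  constructor
  · rintro ⟨S, rfl⟩ x hx
    simp only [zeroSet, Set.mem_ofPred_eq, not_forall] at hx
    obtain ⟨p, hp, h⟩ := hx
    exact ⟨p, fun y hy => hy p hp, h⟩
  · intro h
    refine ⟨{p | ∀ y ∈ V, ev y p = 0}, Set.Subset.antisymm (fun y hy p hp => hp y hy) ?_⟩
    intro x hx
    by_contra hxV
    obtain ⟨p, hp, hne⟩ := h x hxV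
    exact hne (hx p hp)

theorem isZClosed_univ : IsZClosed K (Set.univ : Set (ι → Kˣ)) := by
  rw [isZClosed_iff]; intro x hx; exact absurd (Set.mem_univ x) hx

theorem isZClosed_empty : IsZClosed K (∅ : Set (ι → Kˣ)) := by
  rw [isZClosed_iff]; intro x hx; exact ⟨1, by simp, by simp [ev]⟩

theorem isZClosed_union {V W : Set (ι → Kˣ)} (hV : IsZClosed K V) (hW : IsZClosed K W) :
    IsZClosed K (V ∪ W) := by
  rw [isZClosed_iff] at *
  intro x hx
  rw [Set.mem_union, not_or] at hx
  obtain ⟨p, hp, hpx⟩ := hV x hx.1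
  obtain ⟨q, hq, hqx⟩ := hW x hx.2
  refine ⟨p * q, ?_, ?_⟩
  · rintro y (hy | hy)
    · have := hp y hy; simp only [ev, map_mul] at *; simp [this]
    · have := hq y hy; simp only [ev, map_mul] at *; simp [this]
  · simp only [ev, map_mul] at *; exact mul_ne_zero hpx hqx

theorem isZClosed_sInter {F : Set (Set (ι → Kˣ))} (h : ∀ V ∈ F, IsZClosed K V) :
    IsZClosed K (⋂₀ F) := by
  rw [isZClosed_iff]
  intro x hx
  simp only [Set.mem_sInter, not_forall] at hx
  obtain ⟨V, hV, hxV⟩ := hx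
  obtain ⟨p, hp, hpx⟩ := (isZClosed_iff V).1 (h V hV) x hxV
  exact ⟨p, fun y hy => hp y (hy V hV), hpx⟩

theorem isZClosed_inter {V W : Set (ι → Kˣ)} (hV : IsZClosed K V) (hW : IsZClosed K W) :
    IsZClosed K (V ∩ W) := by
  rw [← Set.sInter_pair]
  apply isZClosed_sInter
  rintro U (rfl | rfl) <;> assumption

theorem isZClosed_biUnion {α : Type} (s : Finset α) {F : α → Set (ι → Kˣ)}
    (h : ∀ a ∈ s, IsZClosed K (F a)) : IsZClosed K (⋃ a ∈ s, F a) := by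
  classical
  induction s using Finset.induction_on with
  | empty => simpa using isZClosed_empty
  | insert a s ha ih =>
    rw [Finset.set_biUnion_insert]
    exact isZClosed_union (h a (by simp)) (ih fun b hb => h b (by simp [hb]))

theorem irred_biUnion {V : Set (ι → Kˣ)} (hV : IsIrredVar K V) {α : Type} (s : Finset α)
    {F : α → Set (ι → Kˣ)}
    (h : ∀ a ∈ s, IsZClosed K (F a)) (hs : V ⊆ ⋃ a ∈ s, F a) : ∃ a ∈ s, V ⊆ F a := by
  classical
  induction s using Finset.induction_on with
  | empty =>
    obtain ⟨x, hx⟩ := hV.2.1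
    simpa using hs hx
  | insert a s ha ih =>
    rw [Finset.set_biUnion_insert] at hs
    have hc : ∀ b ∈ s, IsZClosed K (F b) := fun b hb => h b (by simp [hb])
    rcases hV.2.2 _ _ (h a (by simp)) (isZClosed_biUnion s hc) hs with h1 | h1
    · exact ⟨a, by simp, h1⟩
    · obtain ⟨b, hb, h2⟩ := ih hc h1
      exact ⟨b, by simp [hb], h2⟩

theorem isZClosed_singleton (x : ι → Kˣ) : IsZClosed K ({x} : Set (ι → Kˣ)) := by
  rw [isZClosed_iff]
  intro y hy
  have : ∃ i, y i ≠ x i := by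
    by_contra h
    push Not at h
    exact hy (funext h)
  obtain ⟨i, hi⟩ := this
  refine ⟨MvPolynomial.X i - MvPolynomial.C (x i : K), ?_, ?_⟩
  · rintro z rfl; simp [ev]
  · simp only [ev, map_sub, MvPolynomial.eval_X, MvPolynomial.eval_C]
    rw [sub_ne_zero]
    exact fun h => hi (Units.ext h)

theorem zcl_closed (S : Set (ι → Kˣ)) : IsZClosed K (zcl K S) :=
  isZClosed_sInter fun _ h => h.1

theorem subset_zcl (S : Set (ι → Kˣ)) : S ⊆ zcl K S :=
  Set.subset_sInter fun _ h => h.2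

theorem zcl_min {S C : Set (ι → Kˣ)} (hC : IsZClosed K C) (h : S ⊆ C) : zcl K S ⊆ C :=
  Set.sInter_subset_of_mem ⟨hC, h⟩

/-- Regular functions on the torus. -/
def Reg (g : (ι → Kˣ) → K) : Prop :=
  ∃ (N : ℕ) (q : MvPolynomial ι K), ∀ x, g x * (∏ i, (x i : K)) ^ N = ev x q

theorem Reg.const (a : K) : Reg (fun _ : ι → Kˣ => a) := ⟨0, MvPolynomial.C a, by simp [ev]⟩

theorem Reg.coord (i : ι) : Reg (fun x : ι → Kˣ => (x i : K)) :=
  ⟨0, MvPolynomial.X i, by simp [ev]⟩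

theorem Reg.inv_coord (i : ι) : Reg (fun x : ι → Kˣ => (((x i)⁻¹ : Kˣ) : K)) := by
  classical
  refine ⟨1, ∏ j ∈ Finset.univ.erase i, MvPolynomial.X j, fun x => ?_⟩
  simp only [ev, map_prod, MvPolynomial.eval_X, pow_one]
  rw [← Finset.mul_prod_erase Finset.univ (fun i => (x i : K)) (Finset.mem_univ i), ← mul_assoc]
  simp

theorem Reg.mul {f g : (ι → Kˣ) → K} (hf : Reg f) (hg : Reg g) : Reg (fun x => f x * g x) := by
  obtain ⟨N, p, hp⟩ := hf
  obtain ⟨M, q, hq⟩ := hg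
  refine ⟨N + M, p * q, fun x => ?_⟩
  have := hp x
  have := hq x
  simp only [ev, map_mul] at *
  rw [← hp, ← hq]; ring

theorem Reg.add {f g : (ι → Kˣ) → K} (hf : Reg f) (hg : Reg g) : Reg (fun x => f x + g x) := by
  obtain ⟨N, p, hp⟩ := hf
  obtain ⟨M, q, hq⟩ := hg
  refine ⟨N + M, p * (∏ i, MvPolynomial.X i) ^ M + q * (∏ i, MvPolynomial.X i) ^ N, fun x => ?_⟩
  simp only [ev, map_mul, map_add, map_pow, map_prod, MvPolynomial.eval_X] at *
  rw [← hp, ← hq]; ring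

theorem Reg.prod {α : Type} (s : Finset α) {f : α → (ι → Kˣ) → K} (h : ∀ a, Reg (f a)) :
    Reg (fun x => ∏ a ∈ s, f a x) := by
  classical
  induction s using Finset.induction_on with
  | empty => simpa using Reg.const 1
  | insert a s ha ih => simpa only [Finset.prod_insert ha] using (h a).mul ih

theorem Reg.pow {f : (ι → Kˣ) → K} (h : Reg f) (k : ℕ) : Reg (fun x => f x ^ k) := by
  induction k with
  | zero => simpa using Reg.const 1
  | succ k ih => simpa only [pow_succ] using ih.mul h

theorem Reg.zpow_coord (i : ι) (z : ℤ) : Reg (fun x : ι → Kˣ => ((x i ^ z : Kˣ) : K)) := by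
  obtain ⟨k, rfl | rfl⟩ := z.eq_nat_or_neg
  · simpa using (Reg.coord i).pow k
  · simpa using (Reg.inv_coord (K := K) i).pow k

theorem Reg.monom (b : ι → ℤ) : Reg (K := K) (fun x : ι → Kˣ => ((∏ i, x i ^ b i : Kˣ) : K)) := by
  have h := Reg.prod (K := K) Finset.univ (f := fun i (x : ι → Kˣ) => ((x i ^ b i : Kˣ) : K))
    (fun i => Reg.zpow_coord i (b i))
  simpa only [Units.coe_prod] using h

/-- Regular maps between tori. -/
def RegMap (f : (ι → Kˣ) → (κ → Kˣ)) : Prop := ∀ j, Reg (fun x : ι → Kˣ => (f x j : K))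

theorem RegMap.reg_ev {f : (ι → Kˣ) → (κ → Kˣ)} (hf : RegMap f) (p : MvPolynomial κ K) :
    Reg (fun x => ev (f x) p) := by
  induction p using MvPolynomial.induction_on with
  | C a => simpa [ev] using Reg.const a
  | add p q hp hq => simpa [ev] using hp.add hq
  | mul_X p i hp => simpa [ev] using hp.mul (hf i)

theorem RegMap.preimage {f : (ι → Kˣ) → (κ → Kˣ)} (hf : RegMap f) {C : Set (κ → Kˣ)}
    (hC : IsZClosed K C) : IsZClosed K (f ⁻¹' C) := by
  rw [isZClosed_iff] at *
  intro x hx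
  obtain ⟨p, hp, hpx⟩ := hC _ hx
  obtain ⟨N, q, hq⟩ := hf.reg_ev p
  beta_reduce at hq
  refine ⟨q, fun y hy => ?_, ?_⟩
  · rw [← hq, hp _ hy, zero_mul]
  · rw [← hq]
    refine mul_ne_zero hpx (pow_ne_zero _ (Finset.prod_ne_zero_iff.2 fun i _ => (x i).ne_zero))

theorem IsIrredVar.image {f : (ι → Kˣ) → (κ → Kˣ)} (hf : RegMap f) {V : Set (ι → Kˣ)}
    (hV : IsIrredVar K V) : IsIrredVar K (zcl K (f '' V)) := by
  refine ⟨zcl_closed _, (hV.2.1.image f).mono (subset_zcl _), fun C D hC hD h => ?_⟩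
  have h1 : V ⊆ f ⁻¹' C ∪ f ⁻¹' D := fun x hx => h (subset_zcl _ ⟨x, hx, rfl⟩)
  rcases hV.2.2 _ _ (hf.preimage hC) (hf.preimage hD) h1 with h2 | h2
  · exact Or.inl (zcl_min hC (Set.image_subset_iff.2 h2))
  · exact Or.inr (zcl_min hD (Set.image_subset_iff.2 h2))

theorem irred_univ [CharZero K] : IsIrredVar K (Set.univ : Set (ι → Kˣ)) := by
  refine ⟨isZClosed_univ, ⟨1, trivial⟩, fun C D hC hD h => ?_⟩
  by_contra hcon
  rw [not_or, Set.not_subset, Set.not_subset] at hcon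
  obtain ⟨⟨x, -, hx⟩, ⟨y, -, hy⟩⟩ := hcon
  obtain ⟨p, hp, hpx⟩ := (isZClosed_iff C).1 hC x hx
  obtain ⟨q, hq, hqy⟩ := (isZClosed_iff D).1 hD y hy
  have hz : p * q * ∏ i, MvPolynomial.X i = 0 := by
    apply MvPolynomial.funext
    intro z
    rw [map_mul, map_mul, map_prod, map_zero]
    simp only [MvPolynomial.eval_X]
    by_cases hz : ∃ i, z i = 0
    · obtain ⟨i, hi⟩ := hz
      rw [Finset.prod_eq_zero (Finset.mem_univ i) hi, mul_zero]
    · push Not at hz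
      rcases h (Set.mem_univ (fun i => Units.mk0 (z i) (hz i))) with h1 | h1
      · have := hp _ h1
        simp only [ev, Units.val_mk0] at this
        rw [this]; simp
      · have := hq _ h1
        simp only [ev, Units.val_mk0] at this
        rw [this]; simp
  rw [mul_eq_zero, mul_eq_zero, Finset.prod_eq_zero_iff] at hz
  rcases hz with (rfl | rfl) | ⟨i, -, hi⟩
  · simp [ev] at hpx
  · simp [ev] at hqy
  · exact MvPolynomial.X_ne_zero i hi

/-- vanishing ideal -/
def vI (V : Set (ι → Kˣ)) : Ideal (MvPolynomial ι K) where
  carrier := {p | ∀ x ∈ V, ev x p = 0}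
  zero_mem' := by intro x _; simp [ev]
  add_mem' := by
    intro p q hp hq x hx
    have h1 := hp x hx
    have h2 := hq x hx
    simp only [ev, map_add] at *; rw [h1, h2, add_zero]
  smul_mem' := by
    intro c p hp x hx
    have h1 := hp x hx
    simp only [ev, smul_eq_mul, map_mul] at *; rw [h1, mul_zero]

theorem isZClosed_zero (p : MvPolynomial ι K) : IsZClosed K {x : ι → Kˣ | ev x p = 0} :=
  ⟨{p}, by ext x; simp [zeroSet, ev]⟩

theorem vI_prime {V : Set (ι → Kˣ)} (hV : IsIrredVar K V) : (vI V).IsPrime := by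
  rw [Ideal.isPrime_iff]
  constructor
  · intro h
    have h1 : (1 : MvPolynomial ι K) ∈ vI V := by rw [h]; trivial
    obtain ⟨x, hx⟩ := hV.2.1
    have := h1 x hx
    simp [ev] at this
  · intro p q hpq
    refine hV.2.2 _ _ (isZClosed_zero p) (isZClosed_zero q) fun x hx => ?_
    have := hpq x hx
    simp only [ev, map_mul, mul_eq_zero] at this
    exact this

theorem vI_lt {V W : Set (ι → Kˣ)} (hV : IsIrredVar K V) (h : V < W) :
    vI W < vI V := by
  refine lt_of_le_of_ne (fun p hp x hx => hp x (h.1 hx)) fun heq => h.2 ?_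
  intro x hx
  by_contra hxV
  obtain ⟨p, hp, hpx⟩ := (isZClosed_iff V).1 hV.1 x hxV
  have : p ∈ vI W := by rw [heq]; exact hp
  exact hpx (this x hx)

theorem chain_bound {d : ℕ} (W : Fin (d + 1) → Set (ι → Kˣ))
    (hW : ∀ i, IsIrredVar K (W i)) (hs : StrictMono W) : d ≤ Fintype.card ι := by
  let s : LTSeries (PrimeSpectrum (MvPolynomial ι K)) :=
    { length := d
      toFun := fun i => ⟨vI (W i.rev), vI_prime (hW _)⟩
      step := by
        intro i
        change vI _ < vI _
        exact vI_lt (hW _) (hs (by rw [Fin.rev_lt_rev]; exact Fin.castSucc_lt_succ)) }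
  have h1 : ((s.length : ℕ) : WithBot ℕ∞) ≤ ringKrullDim (MvPolynomial ι K) :=
    Order.LTSeries.length_le_krullDim s
  rw [MvPolynomial.ringKrullDim_of_isNoetherianRing, ringKrullDim_eq_zero_of_field, zero_add,
    Nat.card_eq_fintype_card] at h1
  exact_mod_cast h1

theorem le_vdim {T : Set (ι → Kˣ)} {d : ℕ} (W : Fin (d + 1) → Set (ι → Kˣ))
    (hW : ∀ i, IsIrredVar K (W i) ∧ W i ⊆ T) (hs : StrictMono W) : d ≤ vdim K T := by
  apply le_csSup
  · refine ⟨Fintype.card ι, ?_⟩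
    rintro e ⟨W', h1, h2⟩
    exact chain_bound W' (fun i => (h1 i).1) h2
  · exact ⟨W, hW, hs⟩

end Helpers

section Power

variable {K : Type} [Field K] [IsAlgClosed K] [CharZero K]
variable {ι κ : Type} [Fintype ι] [Fintype κ]

noncomputable instance fintypeRoots (m : ℕ) [NeZero m] : Fintype (rootsOfUnity m K) :=
  Fintype.ofFinite _

/-- Coordinatewise power map. -/
def pw (m : ℕ) (x : ι → Kˣ) : ι → Kˣ := fun i => x i ^ m

theorem RegMap.mulLeft (c : ι → Kˣ) : RegMap (fun x : ι → Kˣ => c * x) := by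
  intro j
  simpa using (Reg.const (c j : K)).mul (Reg.coord j)

theorem RegMap.pw (m : ℕ) : RegMap (pw m : (ι → Kˣ) → (ι → Kˣ)) := by
  intro j
  simpa [BadFields.pw] using (Reg.coord (K := K) j).pow m

theorem exists_root (m : ℕ) [NeZero m] (a : Kˣ) : ∃ b : Kˣ, b ^ m = a := by
  obtain ⟨z, hz⟩ := IsAlgClosed.exists_pow_nat_eq (a : K) (NeZero.pos m)
  have hz0 : z ≠ 0 := by
    rintro rfl
    rw [zero_pow (NeZero.ne m)] at hz
    exact a.ne_zero hz.symm
  exact ⟨Units.mk0 z hz0, Units.ext (by simpa using hz)⟩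

theorem exists_pw (m : ℕ) [NeZero m] (x : ι → Kˣ) : ∃ u : ι → Kˣ, pw m u = x := by
  choose u hu using fun i => exists_root m (x i)
  exact ⟨u, funext hu⟩

theorem avg [DecidableEq ι] (m : ℕ) [NeZero m] (p : MvPolynomial ι K) :
    ∃ p' : MvPolynomial ι K, ∀ x : ι → Kˣ,
      ∑ ζ : ι → rootsOfUnity m K, ev (fun i => (ζ i : Kˣ) * x i) p = ev (pw m x) p' := by
  induction p using MvPolynomial.induction_on' with
  | add p q hp hq =>
    obtain ⟨p', hp'⟩ := hp
    obtain ⟨q', hq'⟩ := hq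
    refine ⟨p' + q', fun x => ?_⟩
    have h1 := hp' x
    have h2 := hq' x
    simp only [ev, map_add, Finset.sum_add_distrib] at *
    rw [h1, h2]
  | monomial d a =>
    have key : ∀ x : ι → Kˣ, ∀ ζ : ι → rootsOfUnity m K,
        ev (fun i => (ζ i : Kˣ) * x i) (MvPolynomial.monomial d a)
          = (∏ i, (((ζ i : Kˣ) : K)) ^ d i) * (a * ∏ i, (x i : K) ^ d i) := by
      intro x ζ
      simp only [ev, MvPolynomial.eval_monomial]
      rw [Finsupp.prod_fintype _ _ (by simp)]
      simp only [Units.val_mul, mul_pow, Finset.prod_mul_distrib]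
      ring
    have hsum : ∀ x : ι → Kˣ, ∑ ζ : ι → rootsOfUnity m K,
        ev (fun i => (ζ i : Kˣ) * x i) (MvPolynomial.monomial d a)
          = (∏ i, ∑ z : rootsOfUnity m K, (((z : Kˣ) : K)) ^ d i) * (a * ∏ i, (x i : K) ^ d i) := by
      intro x
      simp only [key]
      rw [← Finset.sum_mul, Finset.prod_univ_sum, Fintype.piFinset_univ]
    by_cases hd : ∀ i, m ∣ d i
    · choose e he using hd
      refine ⟨MvPolynomial.C (∏ i, ∑ z : rootsOfUnity m K, (((z : Kˣ) : K)) ^ d i) *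
        (MvPolynomial.C a * ∏ i, MvPolynomial.X i ^ e i), fun x => ?_⟩
      rw [hsum]
      simp [ev, pw, he, pow_mul]
    · push Not at hd
      obtain ⟨i, hi⟩ := hd
      refine ⟨0, fun x => ?_⟩
      rw [hsum, Finset.prod_eq_zero (Finset.mem_univ i)]
      · simp [ev]
      · obtain ⟨z0, hz0⟩ := HasEnoughRootsOfUnity.exists_primitiveRoot K m
        have hu : IsUnit z0 := hz0.isUnit (NeZero.ne m)
        let u : rootsOfUnity m K := ⟨hu.unit, by
          rw [mem_rootsOfUnity]; ext; simpa using hz0.pow_eq_one⟩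
        have h1 : z0 ^ d i ≠ 1 := fun h => hi (hz0.dvd_of_pow_eq_one _ h)
        have h2 : ∑ z : rootsOfUnity m K, (((z : Kˣ) : K)) ^ d i =
            z0 ^ d i * ∑ z : rootsOfUnity m K, (((z : Kˣ) : K)) ^ d i := by
          conv_lhs => rw [← Equiv.sum_comp (Equiv.mulLeft u)]
          rw [Finset.mul_sum]
          refine Finset.sum_congr rfl fun z _ => ?_
          simp [u, mul_pow]
        have h3 : (z0 ^ d i - 1) * ∑ z : rootsOfUnity m K, (((z : Kˣ) : K)) ^ d i = 0 := by
          rw [sub_mul, one_mul, ← h2, sub_self]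
        exact (mul_eq_zero.1 h3).resolve_left (sub_ne_zero.2 h1)

/-- The image of a closed set under the power map is closed. -/
theorem pw_image_closed (m : ℕ) [NeZero m] {W : Set (ι → Kˣ)} (hW : IsZClosed K W) :
    IsZClosed K (pw m '' W) := by
  classical
  rw [isZClosed_iff]
  intro y hy
  obtain ⟨x, rfl⟩ := exists_pw m y
  let c : (ι → rootsOfUnity m K) → (ι → Kˣ) := fun ζ i => (ζ i : Kˣ)
  have hc : ∀ ζ : (ι → rootsOfUnity m K), ∀ z, pw m (c ζ * z) = pw m z := by
    intro ζ z
    funext i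
    have : (ζ i : Kˣ) ^ m = 1 := (ζ i).2
    simp [pw, c, mul_pow, this]
  let C : Set (ι → Kˣ) := (⋃ ζ ∈ (Finset.univ : Finset (ι → rootsOfUnity m K)), (fun z => c ζ * z) ⁻¹' W) ∪
    ⋃ ζ ∈ (Finset.univ.erase (1 : (ι → rootsOfUnity m K))), {c ζ * x}
  have hC : IsZClosed K C := isZClosed_union
    (isZClosed_biUnion _ fun ζ _ => (RegMap.mulLeft _).preimage hW)
    (isZClosed_biUnion _ fun ζ _ => isZClosed_singleton _)
  have hx : x ∉ C := by
    rintro (h | h)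
    · simp only [Set.mem_iUnion] at h
      obtain ⟨ζ, -, h⟩ := h
      exact hy ⟨_, h, hc ζ x⟩
    · simp only [Set.mem_iUnion] at h
      obtain ⟨ζ, hζ, h⟩ := h
      apply Finset.ne_of_mem_erase hζ
      have h : x = c ζ * x := h
      have h' : c ζ = 1 := by simpa using h.symm
      funext i
      exact Subtype.ext (congrFun h' i)
  obtain ⟨q, hq, hqx⟩ := (isZClosed_iff C).1 hC x hx
  obtain ⟨p, hp⟩ := avg m q
  refine ⟨p, ?_, ?_⟩
  · rintro _ ⟨w, hw, rfl⟩
    rw [← hp]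
    refine Finset.sum_eq_zero fun ζ _ => hq _ (Or.inl ?_)
    simp only [Set.mem_iUnion]
    refine ⟨ζ⁻¹, Finset.mem_univ _, ?_⟩
    change c ζ⁻¹ * (c ζ * w) ∈ W
    have : c ζ⁻¹ * (c ζ * w) = w := by
      funext i; simp [c]
    rwa [this]
  · rw [← hp, Finset.sum_eq_single (1 : (ι → rootsOfUnity m K))]
    · simpa using hqx
    · intro ζ _ hζ
      refine hq _ (Or.inr ?_)
      simp only [Set.mem_iUnion]
      exact ⟨ζ, Finset.mem_erase.2 ⟨hζ, Finset.mem_univ _⟩, rfl⟩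
    · intro h; exact absurd (Finset.mem_univ _) h

/-- A closed subset of an irreducible `√[m]{V}` with dense image in `V` is everything. -/
theorem mroot_eq_of_dense (m : ℕ) [NeZero m] {V W : Set (ι → Kˣ)}
    (hV : IsIrredVar K (mroot K m V)) (hW : IsZClosed K W)
    (h : V ⊆ zcl K (pw m '' W)) : mroot K m V ⊆ W := by
  classical
  have h1 : V ⊆ pw m '' W := h.trans (zcl_min (pw_image_closed m hW) subset_rfl)
  let c : (ι → rootsOfUnity m K) → (ι → Kˣ) := fun ζ i => (ζ i : Kˣ)
  have hsub : mroot K m V ⊆ ⋃ ζ ∈ (Finset.univ : Finset (ι → rootsOfUnity m K)), (fun z => c ζ * z) ⁻¹' W := by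
    intro x hx
    obtain ⟨w, hw, hwx⟩ := h1 hx
    simp only [Set.mem_iUnion]
    refine ⟨fun i => ⟨w i * (x i)⁻¹, ?_⟩, Finset.mem_univ _, ?_⟩
    · rw [mem_rootsOfUnity, mul_pow, inv_pow, mul_inv_eq_one]
      exact congrFun hwx i
    · change (_ * x) ∈ W
      convert hw using 1
      funext i
      simp [c]
  obtain ⟨ζ, -, hζ⟩ := irred_biUnion hV _ (fun ζ _ => (RegMap.mulLeft (c ζ)).preimage hW) hsub
  intro x hx
  have hx' : (c ζ)⁻¹ * x ∈ mroot K m V := by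
    change (fun i => ((c ζ)⁻¹ * x) i ^ m) ∈ V
    have heq : (fun i => ((c ζ)⁻¹ * x) i ^ m) = fun i => x i ^ m := by
      funext i
      have : (ζ i : Kˣ) ^ m = 1 := (ζ i).2
      simp [c, mul_pow, this]
    rw [heq]
    exact hx
  have := hζ hx'
  simpa using this

end Power

section Toric

theorem clear_denoms {α : Type} [Fintype α] (c : α → ℚ) :
    ∃ (b : ℕ) (d : α → ℤ), b ≠ 0 ∧ ∀ i, (d i : ℚ) = b * c i := by
  classical
  refine ⟨∏ i, (c i).den, fun i => (c i).num * ∏ j ∈ Finset.univ.erase i, ((c j).den : ℤ),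
    Finset.prod_ne_zero_iff.2 fun i _ => (c i).den_ne_zero, fun i => ?_⟩
  rw [← Finset.mul_prod_erase Finset.univ (fun i => (c i).den) (Finset.mem_univ i)]
  push_cast
  rw [mul_right_comm]
  congr 1
  exact ((Rat.den_mul_eq_num (c i))).symm

theorem matrix_lemma {k n : ℕ} (M₁ M₂ : Fin k → Fin n → ℤ)
    (h : ∀ c : Fin k → ℤ, (∀ j, ∑ i, c i * M₂ i j = 0) → ∀ j, ∑ i, c i * M₁ i j = 0) :
    ∃ (m : ℕ) (A : Fin n → Fin n → ℤ), m ≠ 0 ∧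
      ∀ r j, m * M₁ r j + ∑ l, A l j * M₂ r l = 0 := by
  classical
  let P : (Fin n → ℚ) →ₗ[ℚ] (Fin k → ℚ) :=
    Matrix.mulVecLin (Matrix.of fun r l => (M₂ r l : ℚ))
  have hP : ∀ v r, P v r = ∑ l, (M₂ r l : ℚ) * v l := by
    intro v r
    simp [P, Matrix.mulVec, dotProduct]
  have hmem : ∀ j, (fun r => (M₁ r j : ℚ)) ∈ LinearMap.range P := by
    intro j
    by_contra hj
    obtain ⟨f, hf, hker⟩ := Submodule.exists_dual_map_eq_bot_of_notMem hj inferInstance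
    have hfr : ∀ v : Fin k → ℚ, f v = ∑ i, f (Pi.single i 1) * v i := by
      intro v
      conv_lhs => rw [pi_eq_sum_univ' v]
      rw [map_sum]
      refine Finset.sum_congr rfl fun i _ => ?_
      rw [map_smul, smul_eq_mul, mul_comm]
    obtain ⟨b, d, hb, hd⟩ := clear_denoms (fun i => f (Pi.single i 1))
    have hbq : (b : ℚ) ≠ 0 := by exact_mod_cast hb
    have hv : ∀ v : Fin k → ℚ, ∑ i, (d i : ℚ) * v i = b * f v := by
      intro v
      rw [hfr, Finset.mul_sum]
      refine Finset.sum_congr rfl fun i _ => ?_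
      rw [hd]; ring
    have h1 : ∀ l, ∑ i, d i * M₂ i l = 0 := by
      intro l
      have h2 : f (P (Pi.single l 1)) = 0 := by
        have : f (P (Pi.single l 1)) ∈ Submodule.map f (LinearMap.range P) :=
          ⟨_, ⟨_, rfl⟩, rfl⟩
        rw [hker] at this
        exact (Submodule.mem_bot ℚ).1 this
      have h3 := hv (P (Pi.single l 1))
      rw [h2, mul_zero] at h3
      simp only [hP, Pi.single_apply, mul_ite, mul_one, mul_zero, Finset.sum_ite_eq',
        Finset.mem_univ, if_true] at h3
      exact_mod_cast h3
    have h4 := h d h1 j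
    have h5 := hv (fun r => (M₁ r j : ℚ))
    have h6 : ∑ i, (d i : ℚ) * (M₁ i j : ℚ) = 0 := by exact_mod_cast h4
    rw [h6] at h5
    exact (mul_ne_zero hbq hf) h5.symm
  choose v hv using hmem
  obtain ⟨m, A, hm, hA⟩ := clear_denoms (fun p : Fin n × Fin n => v p.1 p.2)
  refine ⟨m, fun l j => - A (j, l), hm, fun r j => ?_⟩
  have h1 := congrFun (hv j) r
  rw [hP] at h1
  have h2 : (m : ℚ) * M₁ r j + ∑ l, (-(A (j, l) : ℚ)) * M₂ r l = 0 := by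
    rw [← h1, Finset.mul_sum, ← Finset.sum_add_distrib]
    refine Finset.sum_eq_zero fun l _ => ?_
    rw [hA]; ring
  exact_mod_cast h2

variable {K : Type} [Field K] [IsAlgClosed K] [CharZero K] {n : ℕ}

/-- Monomial map. -/
def psi (A : Fin n → Fin n → ℤ) (u : Fin n → Kˣ) : Fin n → Kˣ := fun l => ∏ j, u j ^ A l j

/-- The parametrization of the correspondence torus. -/
def phi (m : ℕ) (A : Fin n → Fin n → ℤ) (u : Fin n → Kˣ) : Fin n ⊕ Fin n → Kˣ :=
  Sum.elim (pw m u) (psi A u)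

/-- Truncation. -/
def trunc (i : ℕ) (u : Fin n → Kˣ) : Fin n → Kˣ := fun j => if (j : ℕ) < i then u j else 1

theorem regMap_psi (A : Fin n → Fin n → ℤ) : RegMap (psi A : (Fin n → Kˣ) → (Fin n → Kˣ)) :=
  fun l => Reg.monom (A l)

theorem prod_zpow_zpow {α β : Type} [Fintype α] [Fintype β] (u : β → Kˣ) (A : α → β → ℤ)
    (c : α → ℤ) : ∏ l, (∏ j, u j ^ A l j) ^ c l = ∏ j, u j ^ ∑ l, A l j * c l := by
  simp only [← Finset.prod_zpow, ← zpow_mul]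
  rw [Finset.prod_comm]
  refine Finset.prod_congr rfl fun j _ => ?_
  classical
  induction (Finset.univ : Finset α) using Finset.induction_on with
  | empty => simp
  | insert a s ha ih => rw [Finset.prod_insert ha, Finset.sum_insert ha, zpow_add, ih]

theorem two_zpow {z : ℤ} (h : (Units.mk0 (2 : K) two_ne_zero) ^ z = 1) : z = 0 := by
  have h1 : ((2 : ℚ) ^ z) = 1 := by
    have := congrArg Units.val h
    simp only [Units.val_zpow_eq_zpow_val, Units.val_mk0, Units.val_one] at this
    apply Rat.cast_injective (α := K)
    push_cast
    exact this
  by_contra hz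
  exact hz ((zpow_eq_one_iff_right₀ (by norm_num) (by norm_num)).1 h1)

theorem exists_param {T : Set ((Fin n ⊕ Fin n) → Kˣ)} (hT : IsAlgSubgroup K T)
    (hsurj : ∀ x : Fin n → Kˣ, ∃ y, Sum.elim x y ∈ T) :
    ∃ (m : ℕ) (A : Fin n → Fin n → ℤ), m ≠ 0 ∧ ∀ u, phi m A u ∈ T := by
  classical
  obtain ⟨k, M, rfl⟩ := hT
  have hmem : ∀ x y : Fin n → Kˣ, Sum.elim x y ∈ {y | mpow K M y = 1} ↔
      ∀ r, (∏ j, x j ^ M r (Sum.inl j)) * ∏ j, y j ^ M r (Sum.inr j) = 1 := by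
    intro x y
    change mpow K M _ = 1 ↔ _
    rw [funext_iff]
    simp [mpow, Fintype.prod_sum_type]
  obtain ⟨m, A, hm, hA⟩ := matrix_lemma (fun r j => M r (Sum.inl j)) (fun r j => M r (Sum.inr j)) (by
    intro c hc j
    let x : Fin n → Kˣ := fun j' => if j' = j then Units.mk0 (2 : K) two_ne_zero else 1
    obtain ⟨y, hy⟩ := hsurj x
    rw [hmem] at hy
    have h1 : ∏ r, ((∏ j, x j ^ M r (Sum.inl j)) * ∏ j, y j ^ M r (Sum.inr j)) ^ c r = 1 :=
      Finset.prod_eq_one fun r _ => by rw [hy r, one_zpow]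
    simp only [mul_zpow, Finset.prod_mul_distrib] at h1
    rw [prod_zpow_zpow, prod_zpow_zpow] at h1
    have h2 : ∀ j, ∑ r, M r (Sum.inr j) * c r = 0 := by
      intro j; rw [← hc j]; exact Finset.sum_congr rfl fun _ _ => mul_comm _ _
    simp only [h2, zpow_zero, Finset.prod_const_one, mul_one] at h1
    rw [Finset.prod_eq_single j (by intro b _ hb; simp [x, hb]) (by simp)] at h1
    simp only [x, if_true] at h1
    have := two_zpow h1
    rw [← this]
    exact Finset.sum_congr rfl fun _ _ => mul_comm _ _)
  refine ⟨m, A, hm, fun u => ?_⟩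
  rw [phi, hmem]
  intro r
  simp only [psi, pw]
  rw [prod_zpow_zpow, ← Finset.prod_mul_distrib]
  refine Finset.prod_eq_one fun j _ => ?_
  rw [← zpow_natCast, ← zpow_mul, ← zpow_add, hA r j, zpow_zero]

theorem regMap_phi_trunc (m : ℕ) (A : Fin n → Fin n → ℤ) (i : ℕ) :
    RegMap (fun u : Fin n → Kˣ => phi m A (trunc i u)) := by
  have ht : ∀ j, Reg (fun u : Fin n → Kˣ => (trunc i u j : K)) := by
    intro j
    by_cases h : (j : ℕ) < i
    · simpa [trunc, h] using Reg.coord (K := K) j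
    · simpa [trunc, h] using Reg.const (K := K) 1
  rintro (j | l)
  · simpa [phi, pw] using (ht j).pow m
  · have : (fun u : Fin n → Kˣ => ((phi m A (trunc i u) (Sum.inr l) : Kˣ) : K)) =
        fun u => ((∏ j : Fin n, u j ^ (if (j : ℕ) < i then A l j else 0) : Kˣ) : K) := by
      funext u
      congr 1
      simp only [phi, psi, Sum.elim_inr]
      refine Finset.prod_congr rfl fun j _ => ?_
      by_cases h : (j : ℕ) < i <;> simp [trunc, h]
    rw [this]
    exact Reg.monom _

/-- The flag of subtori. -/
def flag (K : Type) [Field K] (m : ℕ) (A : Fin n → Fin n → ℤ) (i : ℕ) :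
    Set (Fin n ⊕ Fin n → Kˣ) :=
  Set.range fun u : Fin n → Kˣ => phi m A (trunc i u)

theorem flag_closed (m : ℕ) [NeZero m] (A : Fin n → Fin n → ℤ) (i : ℕ) :
    IsZClosed K (flag K m A i) := by
  let f : (Fin n ⊕ Fin n → Kˣ) → (Fin n ⊕ Fin n → Kˣ) := fun p =>
    Sum.elim (fun j => if (j : ℕ) < i then 1 else p (Sum.inl j))
      (fun l => p (Sum.inr l) ^ m * ∏ s, p s ^ (Sum.elim (fun j => - A l j) (fun _ => 0) s))
  have hf : RegMap f := by
    rintro (j | l)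
    · by_cases h : (j : ℕ) < i
      · simpa [f, h] using Reg.const (K := K) 1
      · simpa [f, h] using Reg.coord (K := K) (Sum.inl j)
    · have := ((Reg.coord (K := K) (ι := Fin n ⊕ Fin n) (Sum.inr l)).pow m).mul
        (Reg.monom (Sum.elim (fun j => - A l j) (fun _ => 0)))
      simpa only [f, Sum.elim_inr, Units.val_mul, Units.val_pow_eq_pow_val] using this
  have hS : IsZClosed K (f ⁻¹' {1}) := hf.preimage (isZClosed_singleton _)
  have himg : flag K m A i = pw m '' (f ⁻¹' {1}) := by
    ext p
    constructor
    · rintro ⟨u, rfl⟩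
      obtain ⟨w, hw⟩ := exists_pw m (psi A (trunc i u))
      refine ⟨Sum.elim (trunc i u) w, ?_, ?_⟩
      · change f _ = 1
        funext s
        rcases s with j | l
        · by_cases h : (j : ℕ) < i <;> simp [f, h, trunc]
        · have := congrFun hw l
          simp only [pw, psi] at this
          simp [f, Fintype.prod_sum_type, this]
      · funext s
        rcases s with j | l
        · simp [pw, phi]
        · simpa [phi, pw] using congrFun hw l
    · rintro ⟨q, hq, rfl⟩
      have hq : f q = 1 := hq
      refine ⟨fun j => q (Sum.inl j), ?_⟩
      have ht : trunc i (fun j => q (Sum.inl j)) = fun j => q (Sum.inl j) := by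
        funext j
        have := congrFun hq (Sum.inl j)
        by_cases h : (j : ℕ) < i
        · simp [trunc, h]
        · simp only [f, Sum.elim_inl, h, if_false] at this
          simp [trunc, h, this]
      beta_reduce
      rw [ht]
      funext s
      rcases s with j | l
      · simp [phi, pw]
      · have := congrFun hq (Sum.inr l)
        simp only [f, Sum.elim_inr, Fintype.prod_sum_type, Sum.elim_inl, zpow_neg, zpow_zero,
          Finset.prod_const_one, mul_one, Finset.prod_inv_distrib, Pi.one_apply,
          mul_inv_eq_one] at this
        simp [phi, pw, psi, this]
  rw [himg]
  exact pw_image_closed m hS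

theorem flag_irred (m : ℕ) [NeZero m] (A : Fin n → Fin n → ℤ) (i : ℕ) :
    IsIrredVar K (flag K m A i) := by
  have h := IsIrredVar.image (regMap_phi_trunc (K := K) m A i) irred_univ
  rw [Set.image_univ] at h
  have h2 : zcl K (flag K m A i) = flag K m A i :=
    Set.Subset.antisymm (zcl_min (flag_closed m A i) subset_rfl) (subset_zcl _)
  rw [← h2]
  exact h

theorem flag_lt (m : ℕ) [NeZero m] (A : Fin n → Fin n → ℤ) (i : ℕ) (hi : i < n) :
    flag K m A i < flag K m A (i + 1) := by
  refine ⟨?_, fun hcon => ?_⟩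
  · rintro _ ⟨u, rfl⟩
    refine ⟨trunc i u, ?_⟩
    beta_reduce
    congr 1
    funext j
    simp only [trunc]
    split_ifs <;> first | rfl | omega
  · obtain ⟨u, hu⟩ := hcon ⟨fun _ => Units.mk0 (2 : K) two_ne_zero, rfl⟩
    have := congrFun hu (Sum.inl ⟨i, hi⟩)
    simp only [phi, pw, trunc, Sum.elim_inl, lt_irrefl, if_false, one_pow, Nat.lt_succ_self,
      if_true] at this
    have h2 : (Units.mk0 (2 : K) two_ne_zero) ^ (m : ℤ) = 1 := by
      rw [zpow_natCast]; exact this.symm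
    exact NeZero.ne m (by exact_mod_cast two_zpow h2)

theorem flag_top (m : ℕ) (A : Fin n → Fin n → ℤ) :
    flag K m A n = Set.range (phi m A : (Fin n → Kˣ) → _) := by
  have : ∀ u : Fin n → Kˣ, trunc n u = u := by
    intro u; funext j; simp [trunc]
  simp [flag, this]

theorem corrTorus_param {T : Set ((Fin n ⊕ Fin n) → Kˣ)} (hT : IsCorrTorus K T) :
    ∃ (m : ℕ) (A : Fin n → Fin n → ℤ), m ≠ 0 ∧ T = Set.range (phi m A) := by
  obtain ⟨⟨hTa, hTi⟩, hdim, hs, -⟩ := hT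
  obtain ⟨m, A, hm, hA⟩ := exists_param hTa hs
  have : NeZero m := ⟨hm⟩
  refine ⟨m, A, hm, ?_⟩
  rw [← flag_top]
  have hsub : ∀ i, flag K m A i ⊆ T := by
    rintro i _ ⟨u, rfl⟩
    exact hA _
  by_contra hne
  have hlt : flag K m A n < T := lt_of_le_of_ne (hsub n) (Ne.symm hne)
  let W : Fin (n + 1 + 1) → Set (Fin n ⊕ Fin n → Kˣ) := fun i =>
    if (i : ℕ) ≤ n then flag K m A i else T
  have h := le_vdim (T := T) (d := n + 1) W ?_ ?_
  · omega
  · intro i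
    by_cases h : (i : ℕ) ≤ n
    · simp only [W, h, if_true]
      exact ⟨flag_irred m A i, hsub i⟩
    · simp only [W, h, if_false]
      exact ⟨hTi, subset_rfl⟩
  · rw [Fin.strictMono_iff_lt_succ]
    intro i
    have h1 : (i : ℕ) ≤ n := by omega
    simp only [W, Fin.val_castSucc, Fin.val_succ, h1, if_true]
    by_cases h2 : (i : ℕ) + 1 ≤ n
    · simp only [h2, if_true]
      exact flag_lt m A i (by omega)
    · have h3 : (i : ℕ) = n := by omega
      rw [if_neg h2, h3]
      exact hlt

end Toric

/-- If `V` is Kummer generic and `T` is a correspondence torus, then there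
is a unique irreducible variety `V'` such that `T` induces a toric correspondence between
`V` and `V'`. -/
theorem exists_unique_toricCorr
    (K : Type) [Field K] [IsAlgClosed K] [CharZero K]
    {n : ℕ} (V : Set (Fin n → Kˣ)) (hV : KummerGeneric K V)
    (T : Set ((Fin n ⊕ Fin n) → Kˣ)) (hT : IsCorrTorus K T) :
    ∃! V' : Set (Fin n → Kˣ), IsIrredVar K V' ∧ ToricCorr K T V V' := by
  obtain ⟨m, A, hm, rfl⟩ := corrTorus_param hT
  have : NeZero m := ⟨hm⟩
  have hR : IsIrredVar K (mroot K m V) := hV.2 m (Nat.one_le_iff_ne_zero.2 hm)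
  have hVc : IsZClosed K V := hV.1.1
  have hinl : ∀ u : Fin n → Kˣ, phi m A u ∘ Sum.inl = pw m u := fun u => rfl
  have hinr : ∀ u : Fin n → Kˣ, phi m A u ∘ Sum.inr = psi A u := fun u => rfl
  refine ⟨zcl K (psi A '' mroot K m V), ⟨hR.image (regMap_psi A), ?_, ?_⟩, ?_⟩
  · apply Set.Subset.antisymm
    · apply zcl_min hVc
      rintro _ ⟨p, ⟨-, hp, -⟩, rfl⟩
      exact hp
    · refine Set.Subset.trans ?_ (subset_zcl _)
      intro x hx
      obtain ⟨u, rfl⟩ := exists_pw m x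
      exact ⟨phi m A u, ⟨⟨u, rfl⟩, hx, subset_zcl _ ⟨u, hx, rfl⟩⟩, rfl⟩
  · apply Set.Subset.antisymm
    · apply zcl_min (zcl_closed _)
      rintro _ ⟨p, ⟨-, -, hp⟩, rfl⟩
      exact hp
    · apply zcl_min (zcl_closed _)
      rintro _ ⟨u, hu, rfl⟩
      exact subset_zcl _ ⟨phi m A u, ⟨⟨u, rfl⟩, hu, subset_zcl _ ⟨u, hu, rfl⟩⟩, rfl⟩
  · rintro V' ⟨hV', h1, h2⟩
    apply Set.Subset.antisymm
    · rw [← h2]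
      apply zcl_min (zcl_closed _)
      rintro _ ⟨p, ⟨⟨u, rfl⟩, hu, -⟩, rfl⟩
      exact subset_zcl _ ⟨u, hu, rfl⟩
    · apply zcl_min hV'.1
      have hW : IsZClosed K ((psi A ⁻¹' V') ∩ mroot K m V) :=
        isZClosed_inter ((regMap_psi A).preimage hV'.1) hR.1
      have hd := mroot_eq_of_dense m hR hW (by
        conv_lhs => rw [← h1]
        apply zcl_min (zcl_closed _)
        rintro _ ⟨p, ⟨⟨u, rfl⟩, hu, hu'⟩, rfl⟩
        exact subset_zcl _ ⟨u, ⟨hu', hu⟩, rfl⟩)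
      rintro _ ⟨u, hu, rfl⟩
      exact (hd hu).1

end BadFields
end

section
/- Let K be an algebraically closed field of characteristic 0, let A = ⟨A⟩ ⊆ Kˣ, and let b ∈ (Kˣ)ⁿ be a tuple such that ⟨A ∪ b⟩/A is minimal prealgebraic of length n. Then b does not belong to any coset c·T of a proper subtorus T of (Kˣ)ⁿ with c ∈ (Kˣ)ⁿ having all coordinates algebraic over the field ℚ(A). In particular, the Zariski locus of b over the algebraic closure of ℚ(A) inside K is a free variety. -/
namespace BadFields

variable (K : Type) [Field K]

section Helpers

variable {K}

lemma mem_acl {F : Subfield K} {x : K} :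
    x ∈ (algebraicClosure F K).toSubfield ↔ IsAlgebraic F x :=
  mem_algebraicClosure_iff

lemma nullst (E R : Type*) [Field E] [IsAlgClosed E] [CommRing R] [Nontrivial R] [Algebra E R]
    [Algebra.FiniteType E R] : Nonempty (R →ₐ[E] E) := by
  obtain ⟨M, hM⟩ := Ideal.exists_maximal R
  letI : Field (R ⧸ M) := Ideal.Quotient.field M
  have : Module.Finite E (R ⧸ M) := finite_of_finite_type_of_isJacobsonRing E (R ⧸ M)
  have hbij : Function.Bijective (algebraMap E (R ⧸ M)) :=
    IsAlgClosed.algebraMap_bijective_of_isIntegral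
  exact ⟨(AlgEquiv.ofBijective (Algebra.ofId E (R ⧸ M)) hbij).symm.toAlgHom.comp
    (Ideal.Quotient.mkₐ E M)⟩

lemma relLattice_eq_bot {A : Set Kˣ} {n : ℕ} {b : Fin n → Kˣ} (hn : 2 ≤ n)
    (h : ldimRel K A b = n) : relLattice K A b = ⊥ := by
  unfold ldimRel at h
  have h0 : Module.finrank ℤ (relLattice K A b) = 0 := by omega
  exact Submodule.finrank_eq_zero.mp h0

lemma subset_divHull (A : Set Kˣ) : A ⊆ (divHull K A : Set Kˣ) := fun x hx =>
  ⟨1, one_ne_zero, by simpa using Subgroup.subset_closure hx⟩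

lemma closure_le_divHull (A : Set Kˣ) : Subgroup.closure A ≤ divHull K A :=
  (Subgroup.closure_le _).mpr (subset_divHull A)

lemma mem_divHull_of_pow {A : Set Kˣ} {x : Kˣ} {k : ℕ} (hk : k ≠ 0)
    (hx : x ^ k ∈ divHull K A) : x ∈ divHull K A := by
  obtain ⟨l, hl, h⟩ := hx
  exact ⟨k * l, mul_ne_zero hk hl, by rwa [pow_mul]⟩

lemma divHull_le {A : Set Kˣ} {B : Set Kˣ} (h : A ⊆ (divHull K B : Set Kˣ)) :
    divHull K A ≤ divHull K B := by
  rintro x ⟨k, hk, hx⟩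
  exact mem_divHull_of_pow hk ((Subgroup.closure_le _).mpr h hx)

lemma exists_of_mem_divHull_insert {A : Set Kˣ} {d x : Kˣ}
    (hx : x ∈ divHull K (A ∪ {d})) :
    ∃ (k : ℕ) (l : ℤ), k ≠ 0 ∧ x ^ k * (d ^ l)⁻¹ ∈ divHull K A := by
  obtain ⟨k, hk, hx⟩ := hx
  rw [Subgroup.closure_union] at hx
  obtain ⟨a, ha, y, hy, hxy⟩ := Subgroup.mem_sup.mp hx
  obtain ⟨l, rfl⟩ := Subgroup.mem_closure_singleton.mp hy
  refine ⟨k, l, hk, ?_⟩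
  rw [← hxy, mul_inv_cancel_right]
  exact closure_le_divHull A ha

lemma prod_single_sub {n : ℕ} (b : Fin n → Kˣ) (m : Fin n → ℤ) (i : Fin n) (k l : ℤ) :
    ∏ j, b j ^ ((Pi.single i k - l • m : Fin n → ℤ) j) = b i ^ k * ((∏ j, b j ^ m j) ^ l)⁻¹ := by
  simp only [Pi.sub_apply, zpow_sub, Finset.prod_mul_distrib, Finset.prod_inv_distrib,
    ← Finset.prod_zpow]
  congr 1
  · rw [Finset.prod_eq_single i]
    · simp
    · intro j _ hj
      simp [hj]
    · simp
  · congr 1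
    refine Finset.prod_congr rfl fun j _ => ?_
    rw [Pi.smul_apply, smul_eq_mul, mul_comm, zpow_mul]

lemma unit_zpow_mem (L : Subfield K) {u : Kˣ} (hu : (u : K) ∈ L) (k : ℤ) :
    ((u ^ k : Kˣ) : K) ∈ L := by
  rw [Units.val_zpow_eq_zpow_val]
  exact zpow_mem hu k

lemma closure_mem (L : Subfield K) {B : Set Kˣ} (h : ∀ u ∈ B, (u : K) ∈ L) {x : Kˣ}
    (hx : x ∈ Subgroup.closure B) : (x : K) ∈ L := by
  induction hx using Subgroup.closure_induction with
  | mem x hx => exact h x hx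
  | one => simp
  | mul x y _ _ hx hy => rw [Units.val_mul]; exact mul_mem hx hy
  | inv x _ hx => rw [Units.val_inv_eq_inv_val]; exact inv_mem hx

lemma trdegOver_mono {F F' : Subfield K} (hFF' : F ≤ F')
    (halg : ∀ x ∈ F', IsAlgebraic F x) {s : Set K} (hs : s.Finite) :
    trdegOver K F s ≤ trdegOver K F' s := by
  unfold trdegOver
  apply csSup_le_csSup
  · refine ⟨hs.toFinset.card, ?_⟩
    rintro d ⟨t, hts, rfl, -⟩
    exact Finset.card_le_card fun x hx => by simpa using hts hx
  · refine ⟨0, ∅, by simp, rfl, ?_⟩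
    haveI : IsEmpty {y : K // y ∈ (∅ : Finset K)} := ⟨fun x => absurd x.2 (Finset.notMem_empty _)⟩
    exact algebraicIndependent_empty_type
  · rintro d ⟨t, hts, hd, hind⟩
    refine ⟨t, hts, hd, ?_⟩
    letI : Algebra F F' := (Subfield.inclusion hFF').toAlgebra
    haveI : IsScalarTower F F' K := IsScalarTower.of_algebraMap_eq fun x => rfl
    haveI : Algebra.IsAlgebraic F F' := ⟨fun x => by
      have := halg x x.2
      exact (isAlgebraic_algebraMap_iff (R := F) (S := F') (A := K)
        (algebraMap F' K).injective).mp this⟩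
    exact hind.extendScalars F'

lemma core (A : Set Kˣ) (hA : A = ↑(divHull K A))
    {n : ℕ} (b : Fin n → Kˣ) (hb : MinPrealg K A b) (m : Fin n → ℤ) (hm : m ≠ 0)
    (hd : IsAlgebraic (Subfield.closure (unitSet K A)) ((∏ i, b i ^ m i : Kˣ) : K)) : False := by
  obtain ⟨hn, hl, h0, hmin⟩ := hb
  have hbot := relLattice_eq_bot hn hl
  have hrel : ∀ c : Fin n → ℤ, (∏ i, b i ^ c i) ∈ divHull K A → c = 0 := fun c hc => by
    have : c ∈ relLattice K A b := hc
    rwa [hbot, Submodule.mem_bot] at this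
  set d : Kˣ := ∏ i, b i ^ m i with hdd
  set B : Set Kˣ := ↑(divHull K (A ∪ {d})) with hB
  have hAB : A ⊆ B := Set.subset_union_left.trans (subset_divHull _)
  have hdB : d ∈ B := subset_divHull _ (by simp)
  have h1 : B = ↑(divHull K B) :=
    Set.Subset.antisymm (subset_divHull _) (divHull_le (le_refl _))
  have h2 : A ⊂ B := by
    refine ⟨hAB, fun h => hm (hrel m ?_)⟩
    have := h hdB
    rw [hA] at this
    exact this
  have hdb : d ∈ divHull K (A ∪ Set.range b) := by
    refine Subgroup.prod_mem _ fun i _ => Subgroup.zpow_mem _ ?_ _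
    exact subset_divHull _ (Or.inr ⟨i, rfl⟩)
  have h3 : B ⊂ ↑(divHull K (A ∪ Set.range b)) := by
    refine ⟨divHull_le ?_, fun h => ?_⟩
    · rintro x (hx | rfl)
      · exact subset_divHull _ (Or.inl hx)
      · exact hdb
    · have key : ∀ i, ∃ (k : ℕ) (l : ℤ), k ≠ 0 ∧ (Pi.single i (k : ℤ) - l • m : Fin n → ℤ) = 0 := by
        intro i
        obtain ⟨k, l, hk, hkl⟩ := exists_of_mem_divHull_insert (K := K) (A := A) (d := d) (x := b i)
          (h (subset_divHull _ (Or.inr ⟨i, rfl⟩)))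
        refine ⟨k, l, hk, hrel _ ?_⟩
        rw [prod_single_sub, zpow_natCast]
        exact hkl
      have i01 : (⟨0, by omega⟩ : Fin n) ≠ ⟨1, by omega⟩ := by simp
      obtain ⟨k, l, hk, hkl⟩ := key ⟨0, by omega⟩
      obtain ⟨k', l', hk', hkl'⟩ := key ⟨1, by omega⟩
      have e0 := congrFun hkl ⟨0, by omega⟩
      have e1 := congrFun hkl ⟨1, by omega⟩
      have e2 := congrFun hkl' ⟨1, by omega⟩
      simp [sub_eq_zero] at e0 e1 e2
      rcases e1 with e1 | e1
      · rw [e1] at e0; simp at e0; exact hk e0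
      · rw [e1] at e2; simp at e2; exact hk' e2
  have h4 := hmin B h1 h2 h3
  have hle : trdegRel K A b ≤ trdegRel K B b := by
    refine trdegOver_mono (Subfield.closure_mono (Set.image_mono hAB)) ?_ (Set.finite_range _)
    intro x hx
    let E := algebraicClosure (Subfield.closure (unitSet K A)) K
    have hEc : Subfield.closure (unitSet K B) ≤ E.toSubfield := by
      rw [Subfield.closure_le]
      rintro _ ⟨u, ⟨k, hk, hu⟩, rfl⟩
      have huk : ((u ^ k : Kˣ) : K) ∈ E.toSubfield := by
        refine closure_mem _ ?_ hu
        rintro v (hv | rfl)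
        · exact mem_acl.mpr <| isAlgebraic_algebraMap (A := K) (⟨(v : K), Subfield.subset_closure ⟨v, hv, rfl⟩⟩ :
            Subfield.closure (unitSet K A))
        · exact mem_acl.mpr hd
      rw [Units.val_pow_eq_pow_val] at huk
      have huk' : IsAlgebraic (Subfield.closure (unitSet K A)) ((u : K) ^ k) := mem_acl.mp huk
      exact mem_acl.mpr (IsAlgebraic.of_pow (Nat.pos_of_ne_zero hk) huk')
    exact mem_acl.mp (hEc hx)
  have hln : ldimRel K B b ≤ n := Nat.sub_le _ _
  unfold pdelta at h0 h4
  omega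

/-- Nullstellensatz: the locus has a point with coordinates in the algebraically closed `E`. -/
lemma exists_point [IsAlgClosed K] (F : Subfield K) {n : ℕ} (b : Fin n → Kˣ) :
    ∃ e : Fin n → Kˣ, (∀ i, IsAlgebraic F (e i : K)) ∧
      e ∈ locusOver K {x : K | IsAlgebraic F x} b := by
  let E := algebraicClosure F K
  haveI : IsAlgClosed E := IsAlgClosure.isAlgClosed F
  let s : Set K := Set.range (fun i => (b i : K)) ∪ Set.range (fun i => ((b i)⁻¹ : K))
  let R := Algebra.adjoin E s
  haveI : Algebra.FiniteType E R := (Subalgebra.fg_iff_finiteType _).mp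
    (Subalgebra.fg_def.mpr ⟨s, ((Set.finite_range _).union (Set.finite_range _)), rfl⟩)
  obtain ⟨φ⟩ := nullst E R
  let x : Fin n → R := fun i => ⟨b i, Algebra.subset_adjoin (Or.inl ⟨i, rfl⟩)⟩
  let y : Fin n → R := fun i => ⟨(b i : K)⁻¹, Algebra.subset_adjoin (Or.inr ⟨i, rfl⟩)⟩
  have hxy : ∀ i, x i * y i = 1 := fun i => Subtype.ext (by
    show (b i : K) * (b i : K)⁻¹ = 1
    exact mul_inv_cancel₀ (b i).ne_zero)
  have hne : ∀ i, ((φ (x i) : E) : K) ≠ 0 := fun i h => by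
    have h1 : φ (x i) * φ (y i) = 1 := by rw [← map_mul, hxy, map_one]
    have h2 : φ (x i) = 0 := Subtype.ext h
    rw [h2, zero_mul] at h1
    exact zero_ne_one h1
  refine ⟨fun i => Units.mk0 _ (hne i), fun i => mem_acl.mp (φ (x i)).2, ?_⟩
  rintro C ⟨⟨S, hS, rfl⟩, hbC⟩ p hp
  have hpb : MvPolynomial.eval (fun i => (b i : K)) p = 0 := hbC p hp
  obtain ⟨q, rfl⟩ : p ∈ Set.range (MvPolynomial.map (algebraMap E K)) := by
    refine MvPolynomial.mem_range_map_iff_coeffs_subset.mpr ?_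
    intro c hc
    obtain ⟨k, -, rfl⟩ := MvPolynomial.mem_coeffs_iff.mp hc
    exact ⟨⟨_, mem_acl.mpr (hS p hp k)⟩, rfl⟩
  rw [MvPolynomial.eval_map, ← MvPolynomial.aeval_def] at hpb ⊢
  have hR : MvPolynomial.aeval x q = 0 := by
    apply Subtype.val_injective
    have h := MvPolynomial.comp_aeval_apply (R := E) (f := x) R.val q
    exact h.trans hpb
  have h1 : MvPolynomial.aeval (fun i => φ (x i)) q = (0 : E) := by
    rw [← MvPolynomial.comp_aeval_apply, hR, map_zero]
  have h2 := congrArg (Algebra.ofId E K) h1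
  rw [MvPolynomial.comp_aeval_apply, map_zero] at h2
  exact h2

lemma exists_row {n : ℕ} {T : Set (Fin n → Kˣ)} (hT : IsSubtorus K T) (hne : T ≠ Set.univ) :
    ∃ m : Fin n → ℤ, m ≠ 0 ∧ ∀ t ∈ T, ∏ i, t i ^ m i = 1 := by
  obtain ⟨⟨k, M, rfl⟩, -⟩ := hT
  by_contra! hcon
  refine hne (Set.eq_univ_of_forall fun y => ?_)
  funext j
  by_cases hj : M j = 0
  · simp [mpow, hj]
  · obtain ⟨t, ht, h⟩ := hcon (M j) hj
    exact absurd (congrFun ht j) h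

lemma coset_eq {n : ℕ} {T : Set (Fin n → Kˣ)} {m : Fin n → ℤ}
    (h : ∀ t ∈ T, ∏ i, t i ^ m i = 1) {c x : Fin n → Kˣ} (hx : x ∈ coset K c T) :
    ∏ i, x i ^ m i = ∏ i, c i ^ m i := by
  obtain ⟨t, ht, rfl⟩ := hx
  simp [mul_zpow, Finset.prod_mul_distrib, h t ht]

lemma isAlgebraic_prod (F : Subfield K) {n : ℕ} (c : Fin n → Kˣ) (m : Fin n → ℤ)
    (hc : ∀ i, IsAlgebraic F (c i : K)) : IsAlgebraic F ((∏ i, c i ^ m i : Kˣ) : K) := by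
  have : ((∏ i, c i ^ m i : Kˣ) : K) ∈ (algebraicClosure F K).toSubfield := by
    rw [Units.coe_prod]
    exact prod_mem fun i _ => unit_zpow_mem _ (mem_acl.mpr (hc i)) _
  exact mem_acl.mp this

end Helpers

/-- A tuple realising a minimal prealgebraic extension of `A = ⟨A⟩` lies in
no coset `c·T` of a proper subtorus with `c` algebraic over `ℚ(A)`; in particular its locus
over the algebraic closure of `ℚ(A)` is a free variety. -/
theorem minPrealg_locus_free
    (K : Type) [Field K] [IsAlgClosed K] [CharZero K]
    (A : Set Kˣ) (hA : A = ↑(divHull K A))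
    {n : ℕ} (b : Fin n → Kˣ) (hb : MinPrealg K A b) :
    (∀ (T : Set (Fin n → Kˣ)) (c : Fin n → Kˣ),
      IsSubtorus K T → T ≠ Set.univ →
      (∀ i, IsAlgebraic (↥(Subfield.closure (unitSet K A))) ((c i : Kˣ) : K)) →
      b ∉ coset K c T) ∧
    IsFree K (locusOver K
      {x : K | IsAlgebraic (↥(Subfield.closure (unitSet K A))) x} b) := by
  constructor
  · intro T c hT hne hc hbT
    obtain ⟨m, hm, h⟩ := exists_row hT hne
    refine core A hA b hb m hm ?_
    rw [coset_eq h hbT]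
    exact isAlgebraic_prod _ c m hc
  · rintro ⟨T, c, hT, hne, hsub⟩
    obtain ⟨m, hm, h⟩ := exists_row hT hne
    obtain ⟨e, he, heV⟩ := exists_point (Subfield.closure (unitSet K A)) b
    have hbV : b ∈ locusOver K
      {x : K | IsAlgebraic (↥(Subfield.closure (unitSet K A))) x} b := fun C hC => hC.2
    refine core A hA b hb m hm ?_
    rw [coset_eq h (hsub hbV), ← coset_eq h (hsub heV)]
    exact isAlgebraic_prod _ e m he

end BadFields
end
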